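/- arXiv:2603.17344 — 2 statements merged into one kernel-verified Lean document; each statement's English description precedes it below -/
import Mathlib

section
/- Suppose Assumption 1 holds for the Borel probability measure P on ℝ^m with support Ξ, scale function q, directional function λ, and tail index α > 0, and Assumption 2 holds for X ⊆ ℝ^n, the same closed cone Ξ, g, exponents (γ, ρ), and limit function g*. Define I(y) := inf{λ(w) : w ∈ Ξ, g*(y, w) ≥ 0}, with inf ∅ = +∞. Let (y_u)_{u>0} ⊆ ℝ^n be a family with u^γ y_u ∈ X for all u > 0 and y_u → y₀ ∈ X^∞_γ as u → ∞. Then limsup_{u→∞} log P({z ∈ ℝ^m : g(u^γ y_u, z) > 0}) / (−q(u)) ≤ I(y₀), with the convention log 0 = −∞. -/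
open Filter Topology MeasureTheory Set

noncomputable section

/-- Euclidean space `ℝ^d`. -/
abbrev Rn (d : ℕ) : Type := EuclideanSpace ℝ (Fin d)

/-- A set is a cone: closed under multiplication by positive scalars. -/
def IsPosCone {d : ℕ} (Z : Set (Rn d)) : Prop :=
  ∀ c : ℝ, 0 < c → ∀ z ∈ Z, c • z ∈ Z

/-- `f : (0,∞) → (0,∞)` is regularly varying with index `κ`:
`f(uz)/f(u) → z^κ` as `u → ∞`, for every `z > 0`. -/
def RegVary (f : ℝ → ℝ) (κ : ℝ) : Prop :=
  (∀ u : ℝ, 0 < u → 0 < f u) ∧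
  ∀ z : ℝ, 0 < z → Tendsto (fun u : ℝ => f (u * z) / f u) atTop (𝓝 (z ^ κ))

/-- `f ∈ MRV(Z, h, f*)` (multivariate regular variation on the cone `Z`), except
for the requirement `h ∈ RV(κ)` which is stated separately: `f, f* : Z → [0,∞)`,
`f*` continuous on `Z`, and `f(u • z_u)/h(u) → f*(z)` whenever `z_u → z` in `Z`. -/
def MultiRegVary {d : ℕ} (Z : Set (Rn d)) (f : Rn d → ℝ) (h : ℝ → ℝ)
    (fstar : Rn d → ℝ) : Prop :=
  (∀ z ∈ Z, 0 ≤ f z) ∧ (∀ z ∈ Z, 0 ≤ fstar z) ∧ ContinuousOn fstar Z ∧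
  ∀ z ∈ Z, ∀ zu : ℝ → Rn d, (∀ u : ℝ, 0 < u → zu u ∈ Z) →
    Tendsto zu atTop (𝓝 z) →
    Tendsto (fun u : ℝ => f (u • zu u) / h u) atTop (𝓝 (fstar z))

/-- The asymptotic cone `A^∞_θ` of a set `A` with rate `θ`. -/
def asymCone {d : ℕ} (A : Set (Rn d)) (θ : ℝ) : Set (Rn d) :=
  {y | ∃ a : ℕ → Rn d, ∃ lamk : ℕ → ℝ,
    (∀ k, a k ∈ A) ∧ (∀ k, 0 < lamk k) ∧ Tendsto lamk atTop atTop ∧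
    Tendsto (fun k => (lamk k ^ θ)⁻¹ • a k) atTop (𝓝 y)}

/-- Assumption 1: `P` is a Borel probability measure on `ℝ^m` whose support is the
nonempty closed cone `Ξ`, with density `exp (-Q z)` on `Ξ` (and `0` outside) w.r.t.
Lebesgue measure, `Q ∈ MRV(Ξ, q, lam)` with `q ∈ RV(α)`, `α > 0`, and `lam > 0`
on unit vectors of `Ξ`. -/
def Assumption1 {d : ℕ} (P : Measure (Rn d)) (Ξ : Set (Rn d))
    (Q : Rn d → ℝ) (q : ℝ → ℝ) (lam : Rn d → ℝ) (α : ℝ) : Prop :=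
  IsProbabilityMeasure P ∧
  Ξ.Nonempty ∧ IsClosed Ξ ∧ IsPosCone Ξ ∧
  -- Ξ is the support of P: the smallest closed set of full measure
  P Ξ = 1 ∧ (∀ C : Set (Rn d), IsClosed C → P C = 1 → Ξ ⊆ C) ∧
  -- density of P w.r.t. Lebesgue measure
  P = volume.withDensity
    (fun z => ENNReal.ofReal (Ξ.indicator (fun z' => Real.exp (-(Q z'))) z)) ∧
  0 < α ∧ RegVary q α ∧ MultiRegVary Ξ Q q lam ∧
  (∀ z ∈ Ξ, ‖z‖ = 1 → 0 < lam z)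

/-- Condition (A1): `gs` is a continuous limit function on `X^∞_γ × Ξ` and
`g(x_u, z_u)/u^ρ → gs(y, w)` along all admissible families. -/
def CondA1 {n m : ℕ} (X : Set (Rn n)) (Ξ : Set (Rn m)) (g : Rn n → Rn m → ℝ)
    (γ ρ : ℝ) (gs : Rn n → Rn m → ℝ) : Prop :=
  ContinuousOn (fun p : Rn n × Rn m => gs p.1 p.2) ((asymCone X γ) ×ˢ Ξ) ∧
  ∀ y ∈ asymCone X γ, ∀ w ∈ Ξ, ∀ xu : ℝ → Rn n, ∀ zu : ℝ → Rn m,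
    (∀ u : ℝ, 0 < u → xu u ∈ X) → (∀ u : ℝ, 0 < u → zu u ∈ Ξ) →
    Tendsto (fun u : ℝ => (u ^ γ)⁻¹ • xu u) atTop (𝓝 y) →
    Tendsto (fun u : ℝ => u⁻¹ • zu u) atTop (𝓝 w) →
    Tendsto (fun u : ℝ => g (xu u) (zu u) / u ^ ρ) atTop (𝓝 (gs y w))

/-- Condition (A2): `X^∞_γ \ {0} ≠ ∅`. -/
def CondA2 {n : ℕ} (X : Set (Rn n)) (γ : ℝ) : Prop :=
  (asymCone X γ \ {0}).Nonempty

/-- Condition (A3): `gs(y, 0) < 0` for all `y ∈ X^∞_γ \ {0}`. -/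
def CondA3 {n m : ℕ} (X : Set (Rn n)) (γ : ℝ) (gs : Rn n → Rn m → ℝ) : Prop :=
  ∀ y ∈ asymCone X γ \ {0}, gs y 0 < 0

/-- Condition (A4): every `y ∈ X^∞_γ \ {0}` admits `w ∈ Ξ` with `gs(y, w) > 0`. -/
def CondA4 {n m : ℕ} (X : Set (Rn n)) (Ξ : Set (Rn m)) (γ : ℝ)
    (gs : Rn n → Rn m → ℝ) : Prop :=
  ∀ y ∈ asymCone X γ \ {0}, ∃ w ∈ Ξ, 0 < gs y w

/-- Condition (A5): if `γ < 0` then `g(0, z) ≤ 0` for all `z ∈ Ξ`. -/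
def CondA5 {n m : ℕ} (Ξ : Set (Rn m)) (g : Rn n → Rn m → ℝ) (γ : ℝ) : Prop :=
  γ < 0 → ∀ z ∈ Ξ, g 0 z ≤ 0

/-- Regularity preconditions of Assumption 2: `X` nonempty closed convex, `Ξ` a
nonempty closed cone, `g(·, z)` convex and lower semicontinuous on `X` for each
`z ∈ Ξ`, and `g(x, ·)` continuous on `Ξ` for each `x ∈ X`. -/
def GRegular {n m : ℕ} (X : Set (Rn n)) (Ξ : Set (Rn m))
    (g : Rn n → Rn m → ℝ) : Prop :=
  X.Nonempty ∧ IsClosed X ∧ Convex ℝ X ∧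
  Ξ.Nonempty ∧ IsClosed Ξ ∧ IsPosCone Ξ ∧
  (∀ z ∈ Ξ, ConvexOn ℝ X (fun x => g x z)) ∧
  (∀ z ∈ Ξ, LowerSemicontinuousOn (fun x => g x z) X) ∧
  (∀ x ∈ X, ContinuousOn (fun z => g x z) Ξ)

/-- Assumption 2: the regularity preconditions together with conditions (A1)–(A5)
for exponents `(γ, ρ)` with `γ ≠ 0`, `ρ ≥ 0`, and limit function `gs`. -/
def Assumption2 {n m : ℕ} (X : Set (Rn n)) (Ξ : Set (Rn m)) (g : Rn n → Rn m → ℝ)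
    (γ ρ : ℝ) (gs : Rn n → Rn m → ℝ) : Prop :=
  GRegular X Ξ g ∧ γ ≠ 0 ∧ 0 ≤ ρ ∧
  CondA1 X Ξ g γ ρ gs ∧ CondA2 X γ ∧ CondA3 X γ gs ∧ CondA4 X Ξ γ gs ∧
  CondA5 Ξ g γ

/-!
If `g*(y₀, w) > 0` and `λ(w) < b`, then for large `u` and all `v ∈ Ξ` near `w` the point `u v`
violates the constraint and carries density at least `exp (-b q(u))`. Such points `u v` fill a set
of volume at least `1`, so the violation probability is at least `exp (-b q(u))`.

It remains to pass from `g*(y₀, w) ≥ 0` to strict positivity without increasing `λ` noticeably. The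
limits are homogeneous: `λ(t w) = t^α λ(w)` and `g*(t^γ y, t w) = t^ρ g*(y, w)`; moreover `g*` is
convex in `y`. If `y₀ ≠ 0`, then `g*(·, w)` is negative far along the ray through `y₀`, at
`r^γ y₀` with `r` large, so convexity makes it positive at `t^{-γ} y₀` for `t > 1`, which means
`g*(y₀, t w) > 0`; let `t ↓ 1`. If `y₀ = 0` and `γ > 0`, the same convexity gives some `w₁` with
`g*(0, w₁) > 0`, and `t w₁` with `t ↓ 0` does the job; if `γ < 0`, then `g*(0, ·) < 0`
throughout and the infimum is over the empty set.
-/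

open scoped Pointwise ENNReal

section ContinuousConvergence

variable {ι E : Type*} [TopologicalSpace E] {l : Filter ι} {Z : Set E} {z : E}

/-- Finitely many indices are eventually avoided along `l`, so only late terms of the sequence
matter for the limit. -/
lemma exists_family_through_seq (hl : l ≤ cofinite) (hz : z ∈ Z) {x : ℕ → ι × E}
    (hxZ : ∀ k, (x k).2 ∈ Z) (hx : Tendsto (fun k => (x k).2) atTop (𝓝 z)) :
    ∃ W : ι → E, (∀ u, W u ∈ Z) ∧ Tendsto W l (𝓝 z) ∧ ∀ k, ∃ j, ((x k).1, W (x k).1) = x j := by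
  let W : ι → E := Function.extend (fun k => (x k).1) (fun k => (x k).2) fun _ => z
  have hW (u : ι) : (∃ j, (u, W u) = x j) ∨ (u ∉ range fun k => (x k).1) ∧ W u = z := by
    by_cases hu : ∃ k, (x k).1 = u
    · refine Or.inl ⟨hu.choose, Prod.ext hu.choose_spec.symm ?_⟩
      exact dif_pos hu
    · exact Or.inr ⟨hu, Function.extend_apply' _ _ _ hu⟩
  refine ⟨W, fun u => ?_, fun s hs => ?_, fun k => ?_⟩
  · rcases hW u with ⟨j, hj⟩ | ⟨-, hWu⟩
    · exact mem_of_eq_of_mem (congr_arg Prod.snd hj) (hxZ j)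
    · rwa [hWu]
  · obtain ⟨N, hN⟩ := eventually_atTop.1 (hx.eventually hs)
    have hfin : ((fun k => (x k).1) '' Iio N).Finite := (finite_Iio N).image _
    have havoid : ((fun k => (x k).1) '' Iio N)ᶜ ∈ l := hl hfin.compl_mem_cofinite
    refine mem_map.2 (mem_of_superset havoid fun u hu => ?_)
    change W u ∈ s
    rcases hW u with ⟨j, hj⟩ | ⟨-, hWu⟩
    · have hNj : N ≤ j := not_lt.1 fun hjN => hu ⟨j, hjN, (congr_arg Prod.fst hj).symm⟩
      exact mem_of_eq_of_mem (congr_arg Prod.snd hj) (hN j hNj)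
    · rw [hWu]
      exact mem_of_mem_nhds hs
  · exact (hW (x k).1).resolve_right fun hk => hk.1 ⟨k, rfl⟩

lemma eventually_prod_nhdsWithin_of_forall_family [FirstCountableTopology E]
    [l.IsCountablyGenerated] (hl : l ≤ cofinite) (hz : z ∈ Z) {p : ι × E → Prop}
    (h : ∀ W : ι → E, (∀ u, W u ∈ Z) → Tendsto W l (𝓝 z) → ∀ᶠ u in l, p (u, W u)) :
    ∀ᶠ x in l ×ˢ 𝓝[Z] z, p x := by
  by_contra hnot
  have hfreq : ∃ᶠ x in l ×ˢ 𝓝[Z] z, ¬ p x ∧ x.2 ∈ Z :=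
    (not_eventually.1 hnot).and_eventually (tendsto_snd.eventually self_mem_nhdsWithin)
  obtain ⟨x, hx, hbad⟩ := exists_seq_forall_of_frequently hfreq
  obtain ⟨W, hWZ, hWz, hWx⟩ := exists_family_through_seq hl hz (fun k => (hbad k).2)
    ((tendsto_snd.comp hx).mono_right nhdsWithin_le_nhds)
  obtain ⟨k, hk⟩ := ((tendsto_fst.comp hx).eventually (h W hWZ hWz)).exists
  obtain ⟨j, hj⟩ := hWx k
  exact (hbad j).1 (hj ▸ hk)

end ContinuousConvergence

section RegularVariation

variable {d : ℕ} {Z : Set (Rn d)} {f fstar : Rn d → ℝ} {h : ℝ → ℝ}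

lemma MultiRegVary.tendsto_prod_nhdsWithin (hf : MultiRegVary Z f h fstar) {z : Rn d}
    (hz : z ∈ Z) :
    Tendsto (fun x : ℝ × Rn d => f (x.1 • x.2) / h x.1) (atTop ×ˢ 𝓝[Z] z) (𝓝 (fstar z)) :=
  fun _ hs => eventually_prod_nhdsWithin_of_forall_family atTop_le_cofinite hz
    fun W hW hWz => hf.2.2.2 z hz W (fun u _ => hW u) hWz hs

lemma MultiRegVary.limit_smul (hf : MultiRegVary Z f h fstar) (hZ : IsPosCone Z) {κ : ℝ}
    (hh : RegVary h κ) {t : ℝ} (ht : 0 < t) {z : Rn d} (hz : z ∈ Z) :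
    fstar (t • z) = t ^ κ * fstar z := by
  have hscale : Tendsto (fun u : ℝ => u * t) atTop atTop := tendsto_id.atTop_mul_const ht
  have hlim_smul : Tendsto (fun u : ℝ => f (u • t • z) / h u) atTop (𝓝 (fstar (t • z))) :=
    hf.2.2.2 _ (hZ t ht z hz) (fun _ => t • z) (fun _ _ => hZ t ht z hz) tendsto_const_nhds
  have hlim : Tendsto (fun u : ℝ => f (u • z) / h u) atTop (𝓝 (fstar z)) :=
    hf.2.2.2 _ hz (fun _ => z) (fun _ _ => hz) tendsto_const_nhds
  refine tendsto_nhds_unique hlim_smul (((hh.2 t ht).mul (hlim.comp hscale)).congr' ?_)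
  filter_upwards [eventually_gt_atTop 0] with u hu
  have hhu : h (u * t) ≠ 0 := (hh.1 _ (mul_pos hu ht)).ne'
  rw [Function.comp_apply, smul_smul, mul_comm, div_mul_div_cancel₀ hhu]

end RegularVariation

section LowerBound

lemma measure_inter_ne_zero_of_isOpen {E : Type*} [TopologicalSpace E] [MeasurableSpace E]
    [OpensMeasurableSpace E] {P μ : Measure E} [IsProbabilityMeasure P] (hPμ : P ≪ μ) {Ξ : Set E}
    (hΞ : MeasurableSet Ξ) (hPΞ : P Ξ = 1)
    (hsupp : ∀ C : Set E, IsClosed C → P C = 1 → Ξ ⊆ C) {V : Set E} (hV : IsOpen V) {w : E}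
    (hw : w ∈ Ξ) (hwV : w ∈ V) : μ (V ∩ Ξ) ≠ 0 := by
  intro hnull
  have hPV : P V = 0 := by
    rw [← measure_inter_conull ((prob_compl_eq_zero_iff hΞ).2 hPΞ)]
    exact hPμ hnull
  exact hsupp Vᶜ hV.isClosed_compl ((prob_compl_eq_one_iff hV.measurableSet).2 hPV) hw hwV

variable {E : Type*} [NormedAddCommGroup E] [NormedSpace ℝ E] [FiniteDimensional ℝ E]
  [MeasurableSpace E] [BorelSpace E] (μ : Measure E) [μ.IsAddHaarMeasure]

lemma tendsto_addHaar_smul_atTop [Nontrivial E] {S : Set E} (hS : μ S ≠ 0) :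
    Tendsto (fun u : ℝ => μ (u • S)) atTop (𝓝 ∞) := by
  have hpow : Tendsto (fun u : ℝ => ENNReal.ofReal |u ^ Module.finrank ℝ E|) atTop (𝓝 ∞) :=
    ENNReal.tendsto_ofReal_atTop.comp <|
      tendsto_abs_atTop_atTop.comp (tendsto_pow_atTop Module.finrank_pos.ne')
  simpa only [Measure.addHaar_smul, ENNReal.top_mul hS]
    using ENNReal.Tendsto.mul_const (b := μ S) hpow (Or.inl ENNReal.top_ne_zero)

/-- No constant is lost because the volume of `u • S` exceeds `1` for large `u`. -/
lemma eventually_le_withDensity_of_le_on_smul [Nontrivial E] {S : Set E} (hS : MeasurableSet S)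
    (hμS : μ S ≠ 0) {f : E → ℝ≥0∞} {c : ℝ → ℝ≥0∞} {A : ℝ → Set E}
    (h : ∀ᶠ u in atTop, ∀ w ∈ S, u • w ∈ A u ∧ c u ≤ f (u • w)) :
    ∀ᶠ u in atTop, c u ≤ μ.withDensity f (A u) := by
  have hvol : ∀ᶠ u : ℝ in atTop, 1 ≤ μ (u • S) :=
    (tendsto_addHaar_smul_atTop μ hμS).eventually_const_le ENNReal.one_lt_top
  filter_upwards [h, hvol, eventually_gt_atTop 0] with u hu hu1 hu0
  have huS : MeasurableSet (u • S) := hS.const_smul_of_ne_zero hu0.ne'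
  calc c u ≤ c u * μ (u • S) := le_mul_of_one_le_right' hu1
    _ = ∫⁻ _ in u • S, c u ∂μ := (setLIntegral_const _ _).symm
    _ ≤ ∫⁻ z in u • S, f z ∂μ :=
        setLIntegral_mono' huS (forall_mem_image.2 fun w hw => (hu w hw).2)
    _ = μ.withDensity f (u • S) := (withDensity_apply _ huS).symm
    _ ≤ μ.withDensity f (A u) :=
        measure_mono (image_subset_iff.2 fun w hw => (hu w hw).1)

lemma eventually_exp_neg_le_measure {d : ℕ} [Nontrivial (Rn d)] {P : Measure (Rn d)}
    [IsProbabilityMeasure P] {Ξ : Set (Rn d)} (hΞ : IsClosed Ξ) (hcone : IsPosCone Ξ)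
    (hPΞ : P Ξ = 1) (hsupp : ∀ C : Set (Rn d), IsClosed C → P C = 1 → Ξ ⊆ C)
    {Q lam : Rn d → ℝ} {q : ℝ → ℝ}
    (hdens : P = volume.withDensity
      fun z => ENNReal.ofReal (Ξ.indicator (fun z' => Real.exp (-(Q z'))) z))
    (hq : ∀ u : ℝ, 0 < u → 0 < q u) (hQ : MultiRegVary Ξ Q q lam) {w : Rn d} (hw : w ∈ Ξ) {b : ℝ}
    (hb : lam w < b) {A : ℝ → Set (Rn d)}
    (hA : ∀ᶠ x : ℝ × Rn d in atTop ×ˢ 𝓝[Ξ] w, x.1 • x.2 ∈ A x.1) :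
    ∀ᶠ u in atTop, ENNReal.ofReal (Real.exp (-(b * q u))) ≤ P (A u) := by
  obtain ⟨pu, hpu, pw, hpw, hboth⟩ := eventually_prod_iff.1
    (hA.and ((hQ.tendsto_prod_nhdsWithin hw).eventually_lt_const hb))
  obtain ⟨V, hV, hwV, hVpw⟩ := mem_nhdsWithin.1 hpw
  have hPac : P ≪ volume := hdens ▸ withDensity_absolutelyContinuous _ _
  have hvol : volume (V ∩ Ξ) ≠ 0 :=
    measure_inter_ne_zero_of_isOpen hPac hΞ.measurableSet hPΞ hsupp hV hw hwV
  rw [hdens]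
  refine eventually_le_withDensity_of_le_on_smul volume (hV.measurableSet.inter hΞ.measurableSet)
    hvol ?_
  filter_upwards [hpu, eventually_gt_atTop 0] with u hu hu0 v hv
  obtain ⟨huA, hQu⟩ := hboth hu (hVpw hv)
  refine ⟨huA, ?_⟩
  rw [indicator_of_mem (hcone u hu0 v hv.2)]
  have hQle : Q (u • v) ≤ b * q u := ((div_lt_iff₀ (hq u hu0)).1 hQu).le
  gcongr

lemma log_div_neg_le_of_exp_neg_le {p : ℝ≥0∞} {a b : ℝ} (ha : 0 < a)
    (h : ENNReal.ofReal (Real.exp (-(b * a))) ≤ p) :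
    ENNReal.log p / ((-a : ℝ) : EReal) ≤ b := by
  have hlog : ((-(b * a) : ℝ) : EReal) ≤ ENNReal.log p := by
    simpa only [ENNReal.log_ofReal_of_pos (Real.exp_pos _), Real.log_exp]
      using ENNReal.log_le_log h
  have hneg : ((-a : ℝ) : EReal) ≤ 0 := by exact_mod_cast neg_nonpos.2 ha.le
  calc ENNReal.log p / ((-a : ℝ) : EReal)
      ≤ ((-(b * a) : ℝ) : EReal) / ((-a : ℝ) : EReal) :=
        EReal.antitone_div_right_of_nonpos hneg hlog
    _ = b := by rw [← EReal.coe_div, neg_div_neg_eq, mul_div_cancel_right₀ _ ha.ne']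

end LowerBound

section AsymptoticCone

variable {n : ℕ} {X : Set (Rn n)} {γ : ℝ} {x x₁ x₂ : ℝ → Rn n} {y y₁ y₂ : Rn n}

/-- The family `(x_u)_{u > 0}` in `X` is asymptotic to `y` at rate `γ`, that is `x_u / u^γ → y`.
Values at `u ≤ 0` are irrelevant. These are the families along which condition (A1) is stated. -/
def IsAsymFamily (X : Set (Rn n)) (γ : ℝ) (x : ℝ → Rn n) (y : Rn n) : Prop :=
  (∀ u : ℝ, 0 < u → x u ∈ X) ∧ Tendsto (fun u : ℝ => (u ^ γ)⁻¹ • x u) atTop (𝓝 y)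

lemma isAsymFamily_rpow_smul {yu : ℝ → Rn n} (hX : ∀ u : ℝ, 0 < u → u ^ γ • yu u ∈ X)
    (hy : Tendsto yu atTop (𝓝 y)) : IsAsymFamily X γ (fun u => u ^ γ • yu u) y := by
  refine ⟨hX, hy.congr' ?_⟩
  filter_upwards [eventually_gt_atTop 0] with u hu
  rw [inv_smul_smul₀ (Real.rpow_pos_of_pos hu γ).ne']

lemma IsAsymFamily.mem_asymCone (hx : IsAsymFamily X γ x y) : y ∈ asymCone X γ := by
  have hatTop : Tendsto (fun k : ℕ => (k : ℝ) + 1) atTop atTop :=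
    tendsto_atTop_add_const_right _ _ tendsto_natCast_atTop_atTop
  exact ⟨fun k => x (k + 1), fun k => k + 1, fun k => hx.1 _ (by positivity),
    fun k => by positivity, hatTop, hx.2.comp hatTop⟩

lemma IsAsymFamily.comp_mul_right (hx : IsAsymFamily X γ x y) {t : ℝ} (ht : 0 < t) :
    IsAsymFamily X γ (fun u => x (u * t)) (t ^ γ • y) := by
  have hscale : Tendsto (fun u : ℝ => u * t) atTop atTop := tendsto_id.atTop_mul_const ht
  refine ⟨fun u hu => hx.1 _ (mul_pos hu ht), ((hx.2.comp hscale).const_smul (t ^ γ)).congr' ?_⟩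
  filter_upwards [eventually_gt_atTop 0] with u hu
  have htγ : t ^ γ ≠ 0 := (Real.rpow_pos_of_pos ht γ).ne'
  rw [Function.comp_apply, Real.mul_rpow hu.le ht.le, mul_inv_rev, mul_smul,
    smul_inv_smul₀ htγ]

lemma IsAsymFamily.convexCombo (hX : Convex ℝ X) (hx₁ : IsAsymFamily X γ x₁ y₁)
    (hx₂ : IsAsymFamily X γ x₂ y₂) {a b : ℝ} (ha : 0 ≤ a) (hb : 0 ≤ b) (hab : a + b = 1) :
    IsAsymFamily X γ (fun u => a • x₁ u + b • x₂ u) (a • y₁ + b • y₂) := by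
  refine ⟨fun u hu => hX (hx₁.1 u hu) (hx₂.1 u hu) ha hb hab,
    ((hx₁.2.const_smul a).add (hx₂.2.const_smul b)).congr fun u => ?_⟩
  rw [smul_add, smul_comm a, smul_comm b]

lemma rpow_smul_mem_asymCone (hy : y ∈ asymCone X γ) {t : ℝ} (ht : 0 < t) :
    t ^ γ • y ∈ asymCone X γ := by
  obtain ⟨a, l, haX, hl, hl_atTop, hay⟩ := hy
  refine ⟨a, fun k => l k / t, haX, fun k => div_pos (hl k) ht, hl_atTop.atTop_div_const ht,
    (hay.const_smul (t ^ γ)).congr fun k => ?_⟩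
  rw [Real.div_rpow (hl k).le ht.le, inv_div, div_eq_mul_inv, mul_smul]

lemma zero_mem_of_mem_asymCone (hX : IsClosed X) (hγ : γ < 0) (hy : y ∈ asymCone X γ) :
    (0 : Rn n) ∈ X := by
  obtain ⟨a, l, haX, hl, hl_atTop, hay⟩ := hy
  have hlγ : Tendsto (fun k => l k ^ γ) atTop (𝓝 0) := by
    simpa only [neg_neg, Function.comp_def]
      using (tendsto_rpow_neg_atTop (neg_pos.2 hγ)).comp hl_atTop
  have ha : Tendsto a atTop (𝓝 0) := by
    simpa only [zero_smul, smul_inv_smul₀ (Real.rpow_pos_of_pos (hl _) γ).ne']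
      using hlγ.smul hay
  exact hX.mem_of_tendsto ha (Eventually.of_forall haX)

lemma add_smul_mem_of_mem_asymCone (hX : IsClosed X) (hconv : Convex ℝ X) (hγ : 0 < γ)
    (hy : y ∈ asymCone X γ) {x₀ : Rn n} (hx₀ : x₀ ∈ X) {s : ℝ} (hs : 0 ≤ s) :
    x₀ + s • y ∈ X := by
  obtain ⟨a, l, haX, hl, hl_atTop, hay⟩ := hy
  have hlγ : Tendsto (fun k => s * (l k ^ γ)⁻¹) atTop (𝓝 0) := by
    simpa only [mul_zero, Function.comp_def] using
      (tendsto_inv_atTop_zero.comp ((tendsto_rpow_atTop hγ).comp hl_atTop)).const_mul s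
  have hcombo : Tendsto (fun k => (1 - s * (l k ^ γ)⁻¹) • x₀ + (s * (l k ^ γ)⁻¹) • a k) atTop
      (𝓝 (x₀ + s • y)) := by
    simpa only [sub_zero, one_smul, mul_smul] using
      ((hlγ.const_sub 1).smul_const x₀).add (hay.const_smul s)
  refine hX.mem_of_tendsto hcombo ((hlγ.eventually_lt_const one_pos).mono fun k hk => ?_)
  have hnonneg : 0 ≤ s * (l k ^ γ)⁻¹ := mul_nonneg hs (by have := hl k; positivity)
  exact hconv hx₀ (haX k) (sub_nonneg.2 hk.le) hnonneg (sub_add_cancel _ _)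

lemma exists_isAsymFamily_of_pos (hX : IsClosed X) (hconv : Convex ℝ X) (hγ : 0 < γ)
    (hy : y ∈ asymCone X γ) : ∃ x, IsAsymFamily X γ x y := by
  obtain ⟨x₀, hx₀⟩ : X.Nonempty := let ⟨a, _, haX, _⟩ := hy; ⟨a 0, haX 0⟩
  refine ⟨fun u => x₀ + u ^ γ • y, fun u hu => add_smul_mem_of_mem_asymCone hX hconv hγ hy hx₀
    (Real.rpow_pos_of_pos hu γ).le, ?_⟩
  have hlim : Tendsto (fun u : ℝ => (u ^ γ)⁻¹ • x₀ + y) atTop (𝓝 y) := by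
    simpa only [zero_smul, zero_add, Function.comp_def] using
      ((tendsto_inv_atTop_zero.comp (tendsto_rpow_atTop hγ)).smul_const x₀).add_const y
  refine hlim.congr' ?_
  filter_upwards [eventually_gt_atTop 0] with u hu
  rw [smul_add, inv_smul_smul₀ (Real.rpow_pos_of_pos hu γ).ne']

lemma exists_forall_mem_tendsto_of_tendsto_infDist {ι E : Type*} [MetricSpace E] [ProperSpace E]
    {l : Filter ι} {S : ι → Set E} (hcl : ∀ i, IsClosed (S i)) (hne : ∀ i, (S i).Nonempty) {y : E}
    (h : Tendsto (fun i => Metric.infDist y (S i)) l (𝓝 0)) :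
    ∃ x : ι → E, (∀ i, x i ∈ S i) ∧ Tendsto x l (𝓝 y) := by
  choose x hxS hx using fun i => (hcl i).exists_infDist_eq_dist (hne i) y
  refine ⟨x, hxS, tendsto_iff_dist_tendsto_zero.2 ?_⟩
  simpa only [dist_comm y, hx] using h

lemma smul_subset_smul_of_zero_mem {E : Type*} [AddCommGroup E] [Module ℝ E] {S : Set E}
    (hS : Convex ℝ S) (h0 : (0 : E) ∈ S) {a b : ℝ} (ha : 0 ≤ a) (hb : 0 < b) (hab : a ≤ b) :
    a • S ⊆ b • S := by
  rintro _ ⟨z, hz, rfl⟩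
  rw [mem_smul_set_iff_inv_smul_mem₀ hb.ne', smul_smul]
  exact hS.smul_mem_of_zero_mem h0 hz
    ⟨by positivity, by rwa [inv_mul_le_iff₀ hb, mul_one]⟩

/-- The sets `u^{-γ} X` increase with `u`, as `0 ∈ X`; hence their distance to `y`, which vanishes
along a sequence, vanishes along all `u → ∞`. -/
lemma exists_isAsymFamily_of_neg (hX : IsClosed X) (hconv : Convex ℝ X) (hγ : γ < 0)
    (hy : y ∈ asymCone X γ) : ∃ x, IsAsymFamily X γ x y := by
  have h0 : (0 : Rn n) ∈ X := zero_mem_of_mem_asymCone hX hγ hy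
  obtain ⟨a, l, haX, hl, -, hay⟩ := hy
  have hdist : Tendsto (fun u : ℝ => Metric.infDist y ((u ^ γ)⁻¹ • X)) atTop (𝓝 0) := by
    refine tendsto_order.2 ⟨fun c hc => Eventually.of_forall fun u =>
      hc.trans_le Metric.infDist_nonneg, fun ε hε => ?_⟩
    obtain ⟨k, hk⟩ := (hay.eventually (Metric.ball_mem_nhds y hε)).exists
    filter_upwards [eventually_ge_atTop (l k)] with u hu
    have hu0 : 0 < u := (hl k).trans_le hu
    have hmono : (l k ^ γ)⁻¹ • X ⊆ (u ^ γ)⁻¹ • X :=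
      smul_subset_smul_of_zero_mem hconv h0 (inv_nonneg.2 (Real.rpow_nonneg (hl k).le γ))
        (inv_pos.2 (Real.rpow_pos_of_pos hu0 γ))
        (inv_anti₀ (Real.rpow_pos_of_pos hu0 γ) (Real.rpow_le_rpow_of_nonpos (hl k) hu hγ.le))
    calc Metric.infDist y ((u ^ γ)⁻¹ • X) ≤ dist y ((l k ^ γ)⁻¹ • a k) :=
          Metric.infDist_le_dist_of_mem (hmono (smul_mem_smul_set (haX k)))
      _ < ε := by rwa [dist_comm]
  obtain ⟨x', hx'X, hx'y⟩ := exists_forall_mem_tendsto_of_tendsto_infDist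
    (fun u : ℝ => isClosedMap_smul₀ (u ^ γ)⁻¹ X hX) (fun _ => ⟨_, smul_mem_smul_set h0⟩) hdist
  choose x hxX hx using hx'X
  exact ⟨x, fun u _ => hxX u, hx'y.congr fun u => (hx u).symm⟩

lemma exists_isAsymFamily (hX : IsClosed X) (hconv : Convex ℝ X) (hγ : γ ≠ 0)
    (hy : y ∈ asymCone X γ) : ∃ x, IsAsymFamily X γ x y :=
  hγ.lt_or_gt.elim (exists_isAsymFamily_of_neg hX hconv · hy)
    (exists_isAsymFamily_of_pos hX hconv · hy)

lemma convex_asymCone (hX : IsClosed X) (hconv : Convex ℝ X) (hγ : γ ≠ 0) :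
    Convex ℝ (asymCone X γ) := by
  intro y₁ hy₁ y₂ hy₂ a b ha hb hab
  obtain ⟨x₁, hx₁⟩ := exists_isAsymFamily hX hconv hγ hy₁
  obtain ⟨x₂, hx₂⟩ := exists_isAsymFamily hX hconv hγ hy₂
  exact (hx₁.convexCombo hconv hx₂ ha hb hab).mem_asymCone

end AsymptoticCone

section LimitConstraint

lemma mem_openSegment_smul {E : Type*} [AddCommGroup E] [Module ℝ E] {a b : ℝ}
    (h : 1 ∈ openSegment ℝ a b) (y : E) : y ∈ openSegment ℝ (a • y) (b • y) := by
  obtain ⟨s, t, hs, ht, hst, hone⟩ := h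
  refine ⟨s, t, hs, ht, hst, ?_⟩
  rw [← smul_assoc, ← smul_assoc, ← add_smul, hone, one_smul]

lemma one_mem_openSegment_rpow {γ r s : ℝ} (hγ : γ ≠ 0) (hr : 1 < r) (hs : 0 < s) (hs1 : s < 1) :
    1 ∈ openSegment ℝ (r ^ γ) (s ^ γ) := by
  rcases hγ.lt_or_gt with hneg | hpos
  · have hrγ : r ^ γ < 1 := Real.rpow_lt_one_of_one_lt_of_neg hr hneg
    have hsγ : 1 < s ^ γ := Real.one_lt_rpow_of_pos_of_lt_one_of_neg hs hs1 hneg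
    rw [openSegment_eq_Ioo (hrγ.trans hsγ)]
    exact ⟨hrγ, hsγ⟩
  · have hrγ : 1 < r ^ γ := Real.one_lt_rpow hr hpos
    have hsγ : s ^ γ < 1 := Real.rpow_lt_one hs.le hs1 hpos
    rw [openSegment_symm, openSegment_eq_Ioo (hsγ.trans hrγ)]
    exact ⟨hsγ, hrγ⟩

variable {E F : Type*} [AddCommGroup E] [Module ℝ E] [TopologicalSpace E]
  [AddCommGroup F] [Module ℝ F] [TopologicalSpace F]

/-- A limit constraint function `G` on `K × Ξ`: continuous, convex in the decision `y ∈ K`, jointly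
homogeneous of degree `ρ` under `(y, w) ↦ (t^γ y, t w)`, and strictly satisfied (`G y 0 < 0`) in the
absence of noise unless `y = 0`. These are the properties that the limit `g*` of condition (A1)
inherits from the convex function `g`, together with (A3). -/
structure IsLimitConstraint (K : Set E) (Ξ : Set F) (γ ρ : ℝ) (G : E → F → ℝ) : Prop where
  rpow_smul_mem : ∀ t : ℝ, 0 < t → ∀ y ∈ K, t ^ γ • y ∈ K
  smul_mem : ∀ t : ℝ, 0 < t → ∀ w ∈ Ξ, t • w ∈ Ξ
  zero_mem : 0 ∈ Ξ
  continuousOn : ContinuousOn (fun p : E × F => G p.1 p.2) (K ×ˢ Ξ)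
  convexOn : ∀ w ∈ Ξ, ConvexOn ℝ K fun y => G y w
  map_smul_smul : ∀ t : ℝ, 0 < t → ∀ y ∈ K, ∀ w ∈ Ξ, G (t ^ γ • y) (t • w) = t ^ ρ * G y w
  neg_at_zero : ∀ y ∈ K, y ≠ 0 → G y 0 < 0

namespace IsLimitConstraint

variable {K : Set E} {Ξ : Set F} {γ ρ α b t : ℝ} {G : E → F → ℝ} {φ : F → ℝ} {y : E} {w : F}

lemma map_rpow_smul (hG : IsLimitConstraint K Ξ γ ρ G) (ht : 0 < t) (hy : y ∈ K) (hw : w ∈ Ξ) :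
    G (t ^ γ • y) w = t ^ ρ * G y (t⁻¹ • w) := by
  rw [← hG.map_smul_smul t ht y hy _ (hG.smul_mem _ (inv_pos.2 ht) w hw), smul_inv_smul₀ ht.ne']

lemma tendsto_inv_smul [ContinuousSMul ℝ F] (hG : IsLimitConstraint K Ξ γ ρ G) (hy : y ∈ K)
    (hw : w ∈ Ξ) : Tendsto (fun r : ℝ => G y (r⁻¹ • w)) atTop (𝓝 (G y 0)) := by
  have hr : Tendsto (fun r : ℝ => r⁻¹ • w) atTop (𝓝 0) := by
    simpa only [zero_smul] using (tendsto_inv_atTop_zero (𝕜 := ℝ)).smul_const w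
  refine (hG.continuousOn (y, 0) ⟨hy, hG.zero_mem⟩).tendsto.comp
    (tendsto_nhdsWithin_iff.2 ⟨tendsto_const_nhds.prodMk_nhds hr, ?_⟩)
  filter_upwards [eventually_gt_atTop 0] with r hr0
  exact ⟨hy, hG.smul_mem _ (inv_pos.2 hr0) w hw⟩

lemma exists_neg_eventually_le [ContinuousSMul ℝ F] (hG : IsLimitConstraint K Ξ γ ρ G)
    (hρ : 0 ≤ ρ) (hy : y ∈ K) (hy0 : y ≠ 0) (hw : w ∈ Ξ) :
    ∃ c < 0, ∀ᶠ r : ℝ in atTop, G (r ^ γ • y) w ≤ c := by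
  obtain ⟨c, hGc, hc⟩ := exists_between (hG.neg_at_zero y hy hy0)
  refine ⟨c, hc, ?_⟩
  filter_upwards [(hG.tendsto_inv_smul hy hw).eventually_lt_const hGc, eventually_ge_atTop 1]
    with r hr hr1
  calc G (r ^ γ • y) w = r ^ ρ * G y (r⁻¹ • w) := hG.map_rpow_smul (one_pos.trans_le hr1) hy hw
    _ ≤ G y (r⁻¹ • w) :=
        mul_le_of_one_le_left (hr.trans hc).le (Real.one_le_rpow hr1 hρ)
    _ ≤ c := hr.le

lemma exists_one_lt_neg [ContinuousSMul ℝ F] (hG : IsLimitConstraint K Ξ γ ρ G) (hρ : 0 ≤ ρ)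
    (hy : y ∈ K) (hy0 : y ≠ 0) (hw : w ∈ Ξ) : ∃ r : ℝ, 1 < r ∧ G (r ^ γ • y) w < 0 := by
  obtain ⟨c, hc, hle⟩ := hG.exists_neg_eventually_le hρ hy hy0 hw
  obtain ⟨r, hr, hr1⟩ := (hle.and (eventually_gt_atTop 1)).exists
  exact ⟨r, hr1, hr.trans_lt hc⟩

/-- Along the ray through `y` the convex function `G · w` is nonnegative at `y` and negative
further out, so it is positive on the other side of `y`. -/
lemma pos_smul_of_nonneg [ContinuousSMul ℝ F] (hG : IsLimitConstraint K Ξ γ ρ G) (hγ : γ ≠ 0)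
    (hρ : 0 ≤ ρ) (hy : y ∈ K) (hy0 : y ≠ 0) (hw : w ∈ Ξ) (hnonneg : 0 ≤ G y w) (ht : 1 < t) :
    0 < G y (t • w) := by
  have ht0 : 0 < t⁻¹ := inv_pos.2 (one_pos.trans ht)
  obtain ⟨r, hr, hneg⟩ := hG.exists_one_lt_neg hρ hy hy0 hw
  have hlt : G y w < G (t⁻¹ ^ γ • y) w :=
    (hG.convexOn w hw).lt_right_of_left_lt (hG.rpow_smul_mem r (one_pos.trans hr) y hy)
      (hG.rpow_smul_mem _ ht0 y hy)
      (mem_openSegment_smul (one_mem_openSegment_rpow hγ hr ht0 (inv_lt_one_of_one_lt₀ ht)) y)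
      (hneg.trans_le hnonneg)
  have hpos : 0 < t⁻¹ ^ ρ * G y (t • w) := by
    simpa only [hG.map_rpow_smul ht0 hy hw, inv_inv] using hnonneg.trans_lt hlt
  exact pos_of_mul_pos_right hpos (Real.rpow_nonneg ht0.le ρ)

lemma pos_at_zero [ContinuousSMul ℝ F] (hG : IsLimitConstraint K Ξ γ ρ G) (hγ : 0 < γ)
    (hρ : 0 ≤ ρ) (h0 : (0 : E) ∈ K) (hy : y ∈ K) (hy0 : y ≠ 0) (hw : w ∈ Ξ)
    (hnonneg : 0 ≤ G y w) : 0 < G 0 w := by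
  obtain ⟨r, hr, hneg⟩ := hG.exists_one_lt_neg hρ hy hy0 hw
  have hrγ : 1 < r ^ γ := Real.one_lt_rpow hr hγ
  have hone : 1 ∈ openSegment ℝ (r ^ γ) 0 := by
    rw [openSegment_symm, openSegment_eq_Ioo (one_pos.trans hrγ)]
    exact ⟨one_pos, hrγ⟩
  have hseg : y ∈ openSegment ℝ (r ^ γ • y) 0 := by
    simpa only [zero_smul] using mem_openSegment_smul hone y
  exact hnonneg.trans_lt <| (hG.convexOn w hw).lt_right_of_left_lt
    (hG.rpow_smul_mem r (one_pos.trans hr) y hy) h0 hseg (hneg.trans_le hnonneg)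

lemma neg_at_zero_left [ContinuousSMul ℝ E] [ContinuousSMul ℝ F]
    (hG : IsLimitConstraint K Ξ γ ρ G) (hγ : γ < 0) (hρ : 0 ≤ ρ) (h0 : (0 : E) ∈ K) (hy : y ∈ K)
    (hy0 : y ≠ 0) (hw : w ∈ Ξ) : G 0 w < 0 := by
  obtain ⟨c, hc, hle⟩ := hG.exists_neg_eventually_le hρ hy hy0 hw
  have hr : Tendsto (fun r : ℝ => r ^ γ • y) atTop (𝓝 0) := by
    simpa only [neg_neg, zero_smul] using (tendsto_rpow_neg_atTop (neg_pos.2 hγ)).smul_const y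
  have hlim : Tendsto (fun r : ℝ => G (r ^ γ • y) w) atTop (𝓝 (G 0 w)) := by
    refine (hG.continuousOn (0, w) ⟨h0, hw⟩).tendsto.comp
      (tendsto_nhdsWithin_iff.2 ⟨hr.prodMk_nhds tendsto_const_nhds, ?_⟩)
    filter_upwards [eventually_gt_atTop 0] with r hr0
    exact ⟨hG.rpow_smul_mem r hr0 y hy, hw⟩
  exact (le_of_tendsto hlim hle).trans_lt hc

lemma exists_pos_and_lt_of_ne_zero [ContinuousSMul ℝ F] (hG : IsLimitConstraint K Ξ γ ρ G)
    (hγ : γ ≠ 0) (hρ : 0 ≤ ρ) (hφ : ∀ t : ℝ, 0 < t → φ (t • w) = t ^ α * φ w)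
    (hy : y ∈ K) (hy0 : y ≠ 0) (hw : w ∈ Ξ) (hnonneg : 0 ≤ G y w) (hb : φ w < b) :
    ∃ v ∈ Ξ, 0 < G y v ∧ φ v < b := by
  have hlim : Tendsto (fun t : ℝ => t ^ α * φ w) (𝓝[>] 1) (𝓝 (φ w)) := by
    have hrpow : Tendsto (fun t : ℝ => t ^ α) (𝓝[>] 1) (𝓝 1) := by
      simpa only [Real.one_rpow] using
        (Real.continuousAt_rpow_const 1 α (Or.inl one_ne_zero)).tendsto.mono_left
          nhdsWithin_le_nhds
    simpa only [one_mul] using hrpow.mul_const (φ w)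
  obtain ⟨t, htb, ht⟩ := ((hlim.eventually_lt_const hb).and self_mem_nhdsWithin).exists
  have ht0 : 0 < t := one_pos.trans ht
  exact ⟨t • w, hG.smul_mem t ht0 w hw, hG.pos_smul_of_nonneg hγ hρ hy hy0 hw hnonneg ht,
    (hφ t ht0).trans_lt htb⟩

lemma exists_pos_and_lt_at_zero (hG : IsLimitConstraint K Ξ γ ρ G) (hα : 0 < α)
    (hφ : ∀ t : ℝ, 0 < t → φ (t • w) = t ^ α * φ w) (h0 : (0 : E) ∈ K) (hw : w ∈ Ξ)
    (hpos : 0 < G 0 w) (hb : 0 < b) : ∃ v ∈ Ξ, 0 < G 0 v ∧ φ v < b := by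
  have hlim : Tendsto (fun t : ℝ => t ^ α * φ w) (𝓝[>] 0) (𝓝 0) := by
    have hrpow : Tendsto (fun t : ℝ => t ^ α) (𝓝[>] 0) (𝓝 0) := by
      simpa only [Real.zero_rpow hα.ne'] using
        (Real.continuousAt_rpow_const 0 α (Or.inr hα.le)).tendsto.mono_left nhdsWithin_le_nhds
    simpa only [zero_mul] using hrpow.mul_const (φ w)
  obtain ⟨t, htb, ht⟩ := ((hlim.eventually_lt_const hb).and self_mem_nhdsWithin).exists
  have hGt : G 0 (t • w) = t ^ ρ * G 0 w := by
    simpa only [smul_zero] using hG.map_smul_smul t ht 0 h0 w hw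
  exact ⟨t • w, hG.smul_mem t ht w hw, hGt ▸ mul_pos (Real.rpow_pos_of_pos ht ρ) hpos,
    (hφ t ht).trans_lt htb⟩

lemma exists_pos_and_lt [ContinuousSMul ℝ E] [ContinuousSMul ℝ F]
    (hG : IsLimitConstraint K Ξ γ ρ G) (hγ : γ ≠ 0) (hρ : 0 ≤ ρ) (hα : 0 < α)
    (hφ0 : ∀ w ∈ Ξ, 0 ≤ φ w)
    (hφ : ∀ t : ℝ, 0 < t → ∀ w ∈ Ξ, φ (t • w) = t ^ α * φ w)
    (hactive : ∃ y₁ ∈ K \ {0}, ∃ w₁ ∈ Ξ, 0 < G y₁ w₁)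
    (hy : y ∈ K) (hw : w ∈ Ξ) (hnonneg : 0 ≤ G y w) (hb : φ w < b) :
    ∃ v ∈ Ξ, 0 < G y v ∧ φ v < b := by
  rcases eq_or_ne y 0 with rfl | hy0
  · obtain ⟨y₁, ⟨hy₁, hy₁0⟩, w₁, hw₁, hpos⟩ := hactive
    rcases hγ.lt_or_gt with hneg | hγpos
    · exact absurd hnonneg (hG.neg_at_zero_left hneg hρ hy hy₁ hy₁0 hw).not_ge
    · exact hG.exists_pos_and_lt_at_zero hα (hφ · · w₁ hw₁) hy hw₁
        (hG.pos_at_zero hγpos hρ hy hy₁ hy₁0 hw₁ hpos.le) ((hφ0 w hw).trans_lt hb)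
  · exact hG.exists_pos_and_lt_of_ne_zero hγ hρ (hφ · · w hw) hy hy0 hw hnonneg hb

end IsLimitConstraint

end LimitConstraint

section CondA1

variable {n m : ℕ} {X : Set (Rn n)} {Ξ : Set (Rn m)} {g gs : Rn n → Rn m → ℝ} {γ ρ : ℝ}
  {x : ℝ → Rn n} {y : Rn n} {w : Rn m}

lemma IsPosCone.zero_mem (hcone : IsPosCone Ξ) (hΞ : IsClosed Ξ) (hne : Ξ.Nonempty) :
    (0 : Rn m) ∈ Ξ := by
  obtain ⟨z, hz⟩ := hne
  have hlim : Tendsto (fun r : ℝ => r⁻¹ • z) atTop (𝓝 0) := by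
    simpa only [zero_smul] using (tendsto_inv_atTop_zero (𝕜 := ℝ)).smul_const z
  exact hΞ.mem_of_tendsto hlim
    ((eventually_gt_atTop 0).mono fun r hr => hcone _ (inv_pos.2 hr) z hz)

namespace CondA1

lemma tendsto_family (hA1 : CondA1 X Ξ g γ ρ gs) (hcone : IsPosCone Ξ)
    (hx : IsAsymFamily X γ x y) (hw : w ∈ Ξ) {W : ℝ → Rn m} (hW : ∀ u, W u ∈ Ξ)
    (hWw : Tendsto W atTop (𝓝 w)) :
    Tendsto (fun u : ℝ => g (x u) (u • W u) / u ^ ρ) atTop (𝓝 (gs y w)) := by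
  refine hA1.2 y hx.mem_asymCone w hw x (fun u => u • W u) hx.1
    (fun u hu => hcone u hu _ (hW u)) hx.2 (hWw.congr' ?_)
  filter_upwards [eventually_gt_atTop 0] with u hu
  rw [inv_smul_smul₀ hu.ne']

lemma tendsto_smul (hA1 : CondA1 X Ξ g γ ρ gs) (hcone : IsPosCone Ξ)
    (hx : IsAsymFamily X γ x y) (hw : w ∈ Ξ) :
    Tendsto (fun u : ℝ => g (x u) (u • w) / u ^ ρ) atTop (𝓝 (gs y w)) :=
  hA1.tendsto_family hcone hx hw (fun _ => hw) tendsto_const_nhds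

lemma eventually_pos (hA1 : CondA1 X Ξ g γ ρ gs) (hcone : IsPosCone Ξ)
    (hx : IsAsymFamily X γ x y) (hw : w ∈ Ξ) (hpos : 0 < gs y w) :
    ∀ᶠ p : ℝ × Rn m in atTop ×ˢ 𝓝[Ξ] w, 0 < g (x p.1) (p.1 • p.2) := by
  refine eventually_prod_nhdsWithin_of_forall_family atTop_le_cofinite hw fun W hW hWw => ?_
  filter_upwards [(hA1.tendsto_family hcone hx hw hW hWw).eventually_const_lt hpos,
    eventually_gt_atTop 0] with u hgu hu
  exact (div_pos_iff_of_pos_right (Real.rpow_pos_of_pos hu ρ)).1 hgu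

lemma map_smul_smul (hA1 : CondA1 X Ξ g γ ρ gs) (hcone : IsPosCone Ξ)
    (hx : IsAsymFamily X γ x y) (hw : w ∈ Ξ) {t : ℝ} (ht : 0 < t) :
    gs (t ^ γ • y) (t • w) = t ^ ρ * gs y w := by
  have hscale : Tendsto (fun u : ℝ => u * t) atTop atTop := tendsto_id.atTop_mul_const ht
  refine tendsto_nhds_unique (hA1.tendsto_smul hcone (hx.comp_mul_right ht) (hcone t ht w hw))
    ((((hA1.tendsto_smul hcone hx hw).comp hscale).const_mul (t ^ ρ)).congr' ?_)
  filter_upwards [eventually_gt_atTop 0] with u hu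
  have htρ : t ^ ρ ≠ 0 := (Real.rpow_pos_of_pos ht ρ).ne'
  rw [Function.comp_apply, Real.mul_rpow hu.le ht.le, smul_smul]
  field_simp

lemma convexOn (hA1 : CondA1 X Ξ g γ ρ gs) (hX : IsClosed X) (hconv : Convex ℝ X) (hγ : γ ≠ 0)
    (hcone : IsPosCone Ξ) (hg : ∀ z ∈ Ξ, ConvexOn ℝ X fun x => g x z) (hw : w ∈ Ξ) :
    ConvexOn ℝ (asymCone X γ) fun y => gs y w := by
  refine ⟨convex_asymCone hX hconv hγ, fun y₁ hy₁ y₂ hy₂ a b ha hb hab => ?_⟩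
  obtain ⟨x₁, hx₁⟩ := exists_isAsymFamily hX hconv hγ hy₁
  obtain ⟨x₂, hx₂⟩ := exists_isAsymFamily hX hconv hγ hy₂
  refine le_of_tendsto_of_tendsto
    (hA1.tendsto_smul hcone (hx₁.convexCombo hconv hx₂ ha hb hab) hw)
    (((hA1.tendsto_smul hcone hx₁ hw).const_mul a).add
      ((hA1.tendsto_smul hcone hx₂ hw).const_mul b)) ?_
  filter_upwards [eventually_gt_atTop 0] with u hu
  have hle : g (a • x₁ u + b • x₂ u) (u • w) ≤ a * g (x₁ u) (u • w) + b * g (x₂ u) (u • w) :=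
    (hg _ (hcone u hu w hw)).2 (hx₁.1 u hu) (hx₂.1 u hu) ha hb hab
  rw [← mul_div_assoc, ← mul_div_assoc, ← add_div]
  gcongr

lemma isLimitConstraint (hA1 : CondA1 X Ξ g γ ρ gs) (hA3 : CondA3 X γ gs) (hX : IsClosed X)
    (hconv : Convex ℝ X) (hγ : γ ≠ 0) (hΞ : IsClosed Ξ) (hcone : IsPosCone Ξ) (hne : Ξ.Nonempty)
    (hg : ∀ z ∈ Ξ, ConvexOn ℝ X fun x => g x z) :
    IsLimitConstraint (asymCone X γ) Ξ γ ρ gs where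
  rpow_smul_mem _ ht _ hy := rpow_smul_mem_asymCone hy ht
  smul_mem := hcone
  zero_mem := hcone.zero_mem hΞ hne
  continuousOn := hA1.1
  convexOn _ hw := hA1.convexOn hX hconv hγ hcone hg hw
  map_smul_smul _ ht _ hy _ hw :=
    let ⟨_, hx⟩ := exists_isAsymFamily hX hconv hγ hy
    hA1.map_smul_smul hcone hx hw ht
  neg_at_zero y hy hy0 := hA3 y ⟨hy, hy0⟩

end CondA1

end CondA1

theorem ldp_violation_upper_general {n m : ℕ} {P : Measure (Rn m)} [IsProbabilityMeasure P]
    {Ξ : Set (Rn m)} {Q : Rn m → ℝ} {q : ℝ → ℝ} {lam : Rn m → ℝ} {α : ℝ}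
    (hΞ : IsClosed Ξ) (hcone : IsPosCone Ξ) (hPΞ : P Ξ = 1)
    (hsupp : ∀ C : Set (Rn m), IsClosed C → P C = 1 → Ξ ⊆ C)
    (hdens : P = volume.withDensity
      fun z => ENNReal.ofReal (Ξ.indicator (fun z' => Real.exp (-(Q z'))) z))
    (hα : 0 < α) (hq : RegVary q α) (hQ : MultiRegVary Ξ Q q lam)
    {X : Set (Rn n)} {g gs : Rn n → Rn m → ℝ} {γ ρ : ℝ} (hX : IsClosed X) (hconv : Convex ℝ X)
    (hg : ∀ z ∈ Ξ, ConvexOn ℝ X fun x => g x z) (hγ : γ ≠ 0) (hρ : 0 ≤ ρ)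
    (hA1 : CondA1 X Ξ g γ ρ gs) (hA3 : CondA3 X γ gs)
    (hactive : ∃ y₁ ∈ asymCone X γ \ {0}, ∃ w₁ ∈ Ξ, 0 < gs y₁ w₁)
    {yu : ℝ → Rn n} {y₀ : Rn n} (hyuX : ∀ u : ℝ, 0 < u → u ^ γ • yu u ∈ X)
    (hyconv : Tendsto yu atTop (𝓝 y₀)) :
    limsup (fun u : ℝ =>
        ENNReal.log (P {z : Rn m | 0 < g (u ^ γ • yu u) z}) / ((-(q u) : ℝ) : EReal)) atTop
      ≤ ⨅ w ∈ {w ∈ Ξ | 0 ≤ gs y₀ w}, (lam w : EReal) := by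
  have hx : IsAsymFamily X γ (fun u => u ^ γ • yu u) y₀ := isAsymFamily_rpow_smul hyuX hyconv
  obtain ⟨y₁, hy₁, w₁, hw₁, hpos⟩ := hactive
  have : Nontrivial (Rn m) := ⟨w₁, 0, fun h0 => (hA3 y₁ hy₁).not_gt (h0 ▸ hpos)⟩
  have hgs : IsLimitConstraint (asymCone X γ) Ξ γ ρ gs :=
    hA1.isLimitConstraint hA3 hX hconv hγ hΞ hcone ⟨w₁, hw₁⟩ hg
  refine le_iInf₂ fun w hw => EReal.le_of_forall_lt_iff_le.1 fun b hb => ?_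
  obtain ⟨v, hv, hgv, hlam⟩ := hgs.exists_pos_and_lt hγ hρ hα hQ.2.1
    (fun t ht w hw => hQ.limit_smul hcone hq ht hw) ⟨y₁, hy₁, w₁, hw₁, hpos⟩
    hx.mem_asymCone hw.1 hw.2 (EReal.coe_lt_coe_iff.1 hb)
  have hP : ∀ᶠ u in atTop,
      ENNReal.ofReal (Real.exp (-(b * q u))) ≤ P {z | 0 < g (u ^ γ • yu u) z} :=
    eventually_exp_neg_le_measure hΞ hcone hPΞ hsupp hdens hq.1 hQ hv hlam
      (hA1.eventually_pos hcone hx hv hgv)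
  refine limsup_le_of_le (h := ?_)
  filter_upwards [hP, eventually_gt_atTop 0] with u hu hu0
  exact log_div_neg_le_of_exp_neg_le (hq.1 u hu0) hu

/-- LDP upper bound for the violation probability: along any family
`(y_u)` with `u^γ y_u ∈ X` and `y_u → y₀ ∈ X^∞_γ`,
`limsup_{u→∞} log P(g(u^γ y_u, ·) > 0) / (−q(u)) ≤ I(y₀)`,
where `I(y) = inf{lam(w) : w ∈ Ξ, gs(y, w) ≥ 0}` (with `inf ∅ = ⊤`, `log 0 = ⊥`). -/
theorem ldp_violation_upper {n m : ℕ} (P : Measure (Rn m)) (Ξ : Set (Rn m))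
    (Q : Rn m → ℝ) (q : ℝ → ℝ) (lam : Rn m → ℝ) (α : ℝ)
    (hA1 : Assumption1 P Ξ Q q lam α)
    (X : Set (Rn n)) (g : Rn n → Rn m → ℝ) (γ ρ : ℝ) (gs : Rn n → Rn m → ℝ)
    (hA2 : Assumption2 X Ξ g γ ρ gs)
    (yu : ℝ → Rn n) (y₀ : Rn n)
    (hyuX : ∀ u : ℝ, 0 < u → (u ^ γ) • yu u ∈ X)
    (hy₀ : y₀ ∈ asymCone X γ)
    (hyconv : Tendsto yu atTop (𝓝 y₀)) :
    Filter.limsup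
        (fun u : ℝ =>
          ENNReal.log (P {z : Rn m | 0 < g ((u ^ γ) • yu u) z}) /
            ((-(q u) : ℝ) : EReal))
        atTop
      ≤ ⨅ w ∈ {w ∈ Ξ | 0 ≤ gs y₀ w}, (lam w : EReal) := by
  obtain ⟨_, -, hΞ, hcone, hPΞ, hsupp, hdens, hα, hq, hQ, -⟩ := hA1
  obtain ⟨⟨-, hX, hconv, -, -, -, hg, -, -⟩, hγ, hρ, hlim, ⟨y₁, hy₁⟩, hA3, hA4, -⟩ := hA2
  exact ldp_violation_upper_general hΞ hcone hPΞ hsupp hdens hα hq hQ hX hconv hg hγ hρ hlim hA3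
    ⟨y₁, hy₁, hA4 y₁ hy₁⟩ hyuX hyconv
end
end

section
/- Let J be a nonempty finite index set and, for each j ∈ J, let C_j ∈ ℝ be nonzero and let a_j ∈ ℝ^n, b_j ∈ ℝ^m be exponent vectors. Fix γ ≠ 0, define p_j := γ · (Σ_{i=1}^n a_{j,i}) + Σ_{k=1}^m b_{j,k} for each j ∈ J, and set ρ := max_{j∈J} p_j. Let y ∈ ℝ^n and w ∈ ℝ^m have strictly positive coordinates, and let (x_u)_{u>0} ⊆ (0,∞)^n and (z_u)_{u>0} ⊆ (0,∞)^m be families such that x_u/u^γ → y and z_u/u → w as u → ∞. Then lim_{u→∞} (1/u^ρ) · Σ_{j∈J} C_j (∏_{i=1}^n (x_u)_i^{a_{j,i}}) (∏_{k=1}^m (z_u)_k^{b_{j,k}}) = Σ_{j∈J : p_j = ρ} C_j (∏_{i=1}^n y_i^{a_{j,i}}) (∏_{k=1}^m w_k^{b_{j,k}}), where all powers are real powers of strictly positive reals. -/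
open Filter Topology

/-!
Normalising each variable by its own power of the scale turns a monomial into `s ^ p` times a
quantity that converges, where `p` is the weighted degree of the monomial. After division by `s ^ ρ`
with `ρ` at least every such degree, a factor `s ^ (p - ρ)` is left, which is `1` for the monomials
of degree `ρ` and tends to `0` for the others.
-/

section Scaling

variable {α ι κ : Type*} {l : Filter α} {s : α → ℝ}

theorem tendsto_rpow_sub_atTop_ite {p ρ : ℝ} (hpρ : p ≤ ρ) :
    Tendsto (fun t : ℝ => t ^ (p - ρ)) atTop (𝓝 (if p = ρ then 1 else 0)) := by
  split_ifs with h
  · simp [h]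
  · simpa only [neg_sub] using tendsto_rpow_neg_atTop (sub_pos.2 (lt_of_le_of_ne hpρ h))

theorem tendsto_sum_div_rpow_of_le (hs : Tendsto s l atTop) {J : Finset ι} {f : ι → α → ℝ}
    {p L : ι → ℝ} {ρ : ℝ} (hpρ : ∀ j ∈ J, p j ≤ ρ)
    (hf : ∀ j ∈ J, Tendsto (fun t => f j t / s t ^ p j) l (𝓝 (L j))) :
    Tendsto (fun t => (∑ j ∈ J, f j t) / s t ^ ρ) l (𝓝 (∑ j ∈ J with p j = ρ, L j)) := by
  simp only [Finset.sum_div, Finset.sum_filter]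
  refine tendsto_finsetSum J fun j hj => ?_
  have hlim := (hf j hj).mul ((tendsto_rpow_sub_atTop_ite (hpρ j hj)).comp hs)
  rw [mul_ite, mul_one, mul_zero] at hlim
  refine hlim.congr' ?_
  filter_upwards [hs.eventually_gt_atTop 0] with t ht
  rw [Function.comp_apply, Real.rpow_sub ht,
    div_mul_div_cancel₀ (Real.rpow_pos_of_pos ht (p j)).ne']

theorem prod_div_rpow_rpow {K : Finset κ} {x : κ → ℝ} (hx : ∀ i ∈ K, 0 ≤ x i) {c : ℝ} (hc : 0 < c)
    (g a : κ → ℝ) :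
    ∏ i ∈ K, (x i / c ^ g i) ^ a i = (∏ i ∈ K, x i ^ a i) / c ^ ∑ i ∈ K, g i * a i := by
  rw [Real.rpow_sum_of_pos hc, ← Finset.prod_div_distrib]
  refine Finset.prod_congr rfl fun i hi => ?_
  rw [Real.div_rpow (hx i hi) (Real.rpow_nonneg hc.le _), Real.rpow_mul hc.le]

theorem tendsto_prod_rpow_div_rpow (hs : ∀ᶠ t in l, 0 < s t) {K : Finset κ} {x : α → κ → ℝ}
    {y g : κ → ℝ} (hy : ∀ i ∈ K, 0 < y i)
    (hx : ∀ i ∈ K, Tendsto (fun t => x t i / s t ^ g i) l (𝓝 (y i))) (a : κ → ℝ) :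
    Tendsto (fun t => (∏ i ∈ K, x t i ^ a i) / s t ^ ∑ i ∈ K, g i * a i) l
      (𝓝 (∏ i ∈ K, y i ^ a i)) := by
  have hquot : ∀ᶠ t in l, ∀ i ∈ K, 0 < x t i / s t ^ g i :=
    (eventually_all_finset K).2 fun i hi => (hx i hi).eventually_const_lt (hy i hi)
  refine (tendsto_finsetProd K fun i hi =>
    (hx i hi).rpow_const (p := a i) (Or.inl (hy i hi).ne')).congr' ?_
  filter_upwards [hs, hquot] with t hst hxt
  have hxnonneg : ∀ i ∈ K, 0 ≤ x t i := fun i hi =>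
    ((div_pos_iff_of_pos_right (Real.rpow_pos_of_pos hst _)).1 (hxt i hi)).le
  exact prod_div_rpow_rpow hxnonneg hst g a

theorem algebraic_scaling_convergence_general [Fintype κ] (hs : Tendsto s l atTop)
    (J : Finset ι) (C : ι → ℝ) (a : ι → κ → ℝ) (g : κ → ℝ)
    (p : ι → ℝ) (hp : ∀ j ∈ J, p j = ∑ i, g i * a j i) (ρ : ℝ) (hpρ : ∀ j ∈ J, p j ≤ ρ)
    (y : κ → ℝ) (hy : ∀ i, 0 < y i) (x : α → κ → ℝ)
    (hx : ∀ i, Tendsto (fun t => x t i / s t ^ g i) l (𝓝 (y i))) :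
    Tendsto (fun t => (∑ j ∈ J, C j * ∏ i, x t i ^ a j i) / s t ^ ρ) l
      (𝓝 (∑ j ∈ J with p j = ρ, C j * ∏ i, y i ^ a j i)) := by
  refine tendsto_sum_div_rpow_of_le hs hpρ fun j hj => ?_
  simp only [hp j hj, mul_div_assoc]
  exact (tendsto_prod_rpow_div_rpow (hs.eventually_gt_atTop 0) (fun i _ => hy i)
    (fun i _ => hx i) (a j)).const_mul (C j)

end Scaling

open scoped Classical in
/-- Convergence engine for algebraic constraint functions: for
`g(x, z) = Σ_j C_j x^{a_j} z^{b_j}` on the positive orthants, with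
`p_j = γ·⟨1, a_j⟩ + ⟨1, b_j⟩` and `ρ = max_{j ∈ J} p_j`, along every pair of
families with `x_u/u^γ → y > 0` and `z_u/u → w > 0` one has
`g(x_u, z_u)/u^ρ → Σ_{j : p_j = ρ} C_j y^{a_j} w^{b_j}`. -/
theorem algebraic_scaling_convergence {n m : ℕ} {ι : Type*}
    (J : Finset ι) (hJ : J.Nonempty)
    (C : ι → ℝ) (hC : ∀ j ∈ J, C j ≠ 0)
    (a : ι → Fin n → ℝ) (b : ι → Fin m → ℝ)
    (γ : ℝ) (hγ : γ ≠ 0)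
    (p : ι → ℝ) (hp : ∀ j, p j = γ * (∑ i, a j i) + ∑ k, b j k)
    (ρ : ℝ) (hρ : ρ = J.sup' hJ p)
    (y : Fin n → ℝ) (hy : ∀ i, 0 < y i)
    (w : Fin m → ℝ) (hw : ∀ k, 0 < w k)
    (xu : ℝ → Fin n → ℝ) (zu : ℝ → Fin m → ℝ)
    (hxupos : ∀ u : ℝ, 0 < u → ∀ i, 0 < xu u i)
    (hzupos : ∀ u : ℝ, 0 < u → ∀ k, 0 < zu u k)
    (hxconv : Tendsto (fun u : ℝ => fun i => xu u i / u ^ γ) atTop (𝓝 y))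
    (hzconv : Tendsto (fun u : ℝ => fun k => zu u k / u) atTop (𝓝 w)) :
    Tendsto
      (fun u : ℝ =>
        (∑ j ∈ J, C j * (∏ i, (xu u i) ^ (a j i)) * (∏ k, (zu u k) ^ (b j k))) /
          u ^ ρ)
      atTop
      (𝓝 (∑ j ∈ J.filter (fun j => p j = ρ),
        C j * (∏ i, (y i) ^ (a j i)) * (∏ k, (w k) ^ (b j k)))) := by
  have hscaled : ∀ i, Tendsto (fun u => Sum.elim (xu u) (zu u) i / u ^ Sum.elim (fun _ => γ) 1 i)
      atTop (𝓝 (Sum.elim y w i)) :=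
    Sum.rec (tendsto_pi_nhds.1 hxconv) (by simpa using tendsto_pi_nhds.1 hzconv)
  simpa [mul_assoc] using algebraic_scaling_convergence_general tendsto_id J C
    (fun j => Sum.elim (a j) (b j)) (Sum.elim (fun _ => γ) 1) p
    (fun j _ => by simp [hp, Finset.mul_sum]) ρ (fun j hj => hρ ▸ J.le_sup' p hj)
    (Sum.elim y w) (Sum.rec hy hw) (fun u => Sum.elim (xu u) (zu u)) hscaled
end
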